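/- Let n be a positive integer with n ≡ 1 (mod 3) and let M = (n-1)/3 or M = n-1. Then, modulo [n]*Phi_n(q)^4, sum_{k=0}^{M} [6k+1] ((q;q^3)_k^6 / (q^3;q^3)_k^6) q^{3k} ≡ [n] * ((q^2;q^3)_{(n-1)/3}^3 / (q^3;q^3)_{(n-1)/3}^3) * ( 1 + [n]^2 (2 - q^n) * sum_{j=1}^{(n-1)/3} ( q^{3j-1}/[3j-1]^2 - q^{3j}/[3j]^2 ) ). -/

import Mathlib

open Finset

/-- The generator `q` of the field `ℚ(q)` of rational functions. -/
noncomputable def q : RatFunc ℚ := RatFunc.X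

/-- The `q`-integer `[r] = (1 - q^r)/(1 - q)`. -/
noncomputable def qint (r : ℤ) : RatFunc ℚ := (1 - q ^ r) / (1 - q)

/-- The `q`-shifted factorial `(x; b)_m = (1-x)(1-xb)⋯(1-x b^(m-1))`. -/
noncomputable def qpoch (x b : RatFunc ℚ) (m : ℕ) : RatFunc ℚ :=
  ∏ i ∈ Finset.range m, (1 - x * b ^ i)

/-- `f ≡ g (mod P)`: `f - g = P * (r/s)` with `s` coprime to `P`. -/
def qcong (f g : RatFunc ℚ) (P : Polynomial ℚ) : Prop :=
  ∃ r s : Polynomial ℚ, IsCoprime s P ∧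
    f - g = algebraMap (Polynomial ℚ) (RatFunc ℚ) P *
      (algebraMap (Polynomial ℚ) (RatFunc ℚ) r / algebraMap (Polynomial ℚ) (RatFunc ℚ) s)


lemma jac_rat {F : Type*} [Field F] (v K L w : F) (hv0 : v ≠ 0)
    (h1 : 1 - v ≠ 0) (h2 : 1 - v * L ≠ 0) (h3 : 1 - v ^ 3 * L ≠ 0)
    (h4 : 1 + (v ^ 3 * L) ^ 2 - v ^ 3 * L * w ≠ 0)
    (h5 : L - v ^ 2 * K ≠ 0) (h6 : 1 - v ^ 7 * L * K ≠ 0)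
    (h8 : 1 - v ^ 4 * L ≠ 0) :
    (-v * L * (1 - v ^ 5 * L ^ 2) /
      ((1 - v) * (1 - v ^ 3 * L) * (1 + (v ^ 3 * L) ^ 2 - v ^ 3 * L * w) * (1 - v * L))) *
    ((1 - v ^ 5 * L * K) * (L - K) / ((L - v ^ 2 * K) * (1 - v ^ 7 * L * K)) *
      ((1 - v ^ 4 * K) ^ 2 * (1 + (v ^ 4 * K) ^ 2 - v ^ 4 * K * w)) -
      (1 - v ^ 3 * K) ^ 2 * (1 + (v ^ 3 * K) ^ 2 - v ^ 3 * K * w)) =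
    (1 - v ^ 7 * K ^ 2) / (1 - v) * (v ^ 3 * K) *
    ((1 - v ^ 5 * L * K) * (v ^ 3 * L - 1) / (v ^ 2 * (v * L - 1) * (1 - v ^ 7 * L * K)) -
     (1 - v ^ 4 * L) * (1 - v ^ 2 * L) * (1 + (v ^ 2 * L) ^ 2 - v ^ 2 * L * w) /
      ((1 - v ^ 3 * L) * (1 + (v ^ 3 * L) ^ 2 - v ^ 3 * L * w) * (1 - v * L)) *
     ((1 - v ^ 2 * L) * (L - K) / ((L - v ^ 2 * K) * (1 - v ^ 4 * L)))) := by
  rw [show v * L - 1 = -(1 - v * L) by ring]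
  obtain ⟨D, hD⟩ : ∃ D, D = 1 + (v ^ 3 * L) ^ 2 - v ^ 3 * L * w := ⟨_, rfl⟩
  rw [← hD] at h4 ⊢
  field_simp
  rw [hD]
  ring

lemma qp_succ (x b : RatFunc ℚ) (m : ℕ) :
    qpoch x b (m + 1) = qpoch x b m * (1 - x * b ^ m) := by
  simp [qpoch, Finset.prod_range_succ]

lemma qp_zero (x b : RatFunc ℚ) : qpoch x b 0 = 1 := by
  simp [qpoch]

lemma qp_succ' (x b : RatFunc ℚ) (m : ℕ) :
    qpoch x b (m + 1) = (1 - x) * qpoch (x * b) b m := by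
  simp only [qpoch, Finset.prod_range_succ']
  rw [mul_comm]
  congr 1
  · simp
  · apply Finset.prod_congr rfl
    intro i _
    ring

noncomputable def XX (v y : RatFunc ℚ) (k : ℕ) : RatFunc ℚ :=
  qpoch v (v ^ 3) k ^ 2 * (qpoch (v * y) (v ^ 3) k * qpoch (v / y) (v ^ 3) k) /
    (qpoch (v ^ 3) (v ^ 3) k ^ 2 * (qpoch (v ^ 3 * y) (v ^ 3) k * qpoch (v ^ 3 / y) (v ^ 3) k))

noncomputable def tt (v y L : RatFunc ℚ) (k : ℕ) : RatFunc ℚ :=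
  (1 - v * ((v ^ 3) ^ k) ^ 2) / (1 - v) * XX v y k *
    (qpoch (v ^ 2 * L) (v ^ 3) k * qpoch (1 / L) (v ^ 3) k /
      (qpoch (v ^ 2 / L) (v ^ 3) k * qpoch (v ^ 4 * L) (v ^ 3) k)) * (v ^ 3) ^ k

noncomputable def rho (v w L : RatFunc ℚ) : RatFunc ℚ :=
  (1 - v ^ 4 * L) * (1 - v ^ 2 * L) * (1 + (v ^ 2 * L) ^ 2 - v ^ 2 * L * w) /
      ((1 - v ^ 3 * L) * (1 + (v ^ 3 * L) ^ 2 - v ^ 3 * L * w) * (1 - v * L))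

noncomputable def hh (v w L : RatFunc ℚ) : RatFunc ℚ :=
  (-v * L * (1 - v ^ 5 * L ^ 2) /
      ((1 - v) * (1 - v ^ 3 * L) * (1 + (v ^ 3 * L) ^ 2 - v ^ 3 * L * w) * (1 - v * L)))

lemma pair_eq (u y w K : RatFunc ℚ) (hy : y ≠ 0) (hw : w = y + 1 / y) :
    (1 - u * y * K) * (1 - u / y * K) = 1 + (u * K) ^ 2 - u * K * w := by
  subst hw; field_simp; ring

lemma XX_succ (v y w : RatFunc ℚ) (hy : y ≠ 0) (hw : w = y + 1 / y) (k : ℕ) :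
    XX v y (k + 1) = XX v y k *
      ((1 - v * (v ^ 3) ^ k) ^ 2 * (1 + (v * (v ^ 3) ^ k) ^ 2 - v * (v ^ 3) ^ k * w) /
      ((1 - v ^ 3 * (v ^ 3) ^ k) ^ 2 *
        (1 + (v ^ 3 * (v ^ 3) ^ k) ^ 2 - v ^ 3 * (v ^ 3) ^ k * w))) := by
  rw [← pair_eq v y w _ hy hw, ← pair_eq (v ^ 3) y w _ hy hw]
  simp only [XX, qp_succ, div_mul_div_comm]
  congr 1 <;> ring

lemma fld1 {F : Type*} [Field F] (v L K X A B C D a b c d e f : F) (hv0 : v ≠ 0) (hL : L ≠ 0) :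
    f / e * X * ((A * c) * (a / (v ^ 3 * L) * B) / (b / (v * L) * C * (D * d))) * (K * v ^ 3) =
      X * (A * B / (C * D)) * (f / e * (v ^ 3 * K) * (c * a / (v ^ 2 * b * d))) := by
  have h : (v * L) / (v ^ 3 * L) = 1 / v ^ 2 := by field_simp
  calc _ = X * (A * B / (C * D)) * (f / e * (v ^ 3 * K) * (c * a / (b * d))) *
        ((v * L) / (v ^ 3 * L)) := by simp only [div_eq_mul_inv, mul_inv, inv_inv]; ring
    _ = _ := by rw [h]; ring

lemma fld2 {F : Type*} [Field F] (v L K X A B C D a b c d e f : F) (hL : L ≠ 0) :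
    f / e * X * (c * A * (B * (b / L)) / (C * (a / L) * (d * D))) * (K * v ^ 3) =
      X * (A * B / (C * D)) * (f / e * (v ^ 3 * K) * (c * b / (a * d))) := by
  have h : L / L = 1 := div_self hL
  calc _ = X * (A * B / (C * D)) * (f / e * (v ^ 3 * K) * (c * b / (a * d))) *
        (L / L) := by simp only [div_eq_mul_inv, mul_inv, inv_inv]; ring
    _ = _ := by rw [h]; ring

lemma fld3 {F : Type*} [Field F] (L A B C D a b c d : F) (hL : L ≠ 0) :
    (A * c * (B * (b / L))) / (C * (a / L) * (D * d)) =
      A * B / (C * D) * (c * b / (a * d)) := by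
  have h : L / L = 1 := div_self hL
  calc _ = A * B / (C * D) * (c * b / (a * d)) * (L / L) := by
        simp only [div_eq_mul_inv, mul_inv, inv_inv]; ring
    _ = _ := by rw [h]; ring

set_option maxHeartbeats 1000000 in
lemma jac_tele (v y w L : RatFunc ℚ) (hy : y ≠ 0) (hw : w = y + 1 / y) (hL : L ≠ 0) (hv0 : v ≠ 0)
    (h1 : 1 - v ≠ 0) (h2 : 1 - v * L ≠ 0) (h3 : 1 - v ^ 3 * L ≠ 0)
    (h4 : 1 + (v ^ 3 * L) ^ 2 - v ^ 3 * L * w ≠ 0)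
    (h5 : ∀ k : ℕ, L - v ^ 2 * (v ^ 3) ^ k ≠ 0) (h6 : ∀ k : ℕ, 1 - v ^ 7 * L * (v ^ 3) ^ k ≠ 0)
    (h8 : 1 - v ^ 4 * L ≠ 0)
    (h9 : ∀ k : ℕ, 1 - v ^ 3 * (v ^ 3) ^ k ≠ 0)
    (h10 : ∀ k : ℕ, 1 + (v ^ 3 * (v ^ 3) ^ k) ^ 2 - v ^ 3 * (v ^ 3) ^ k * w ≠ 0) (m : ℕ) :
    ∑ k ∈ Finset.range (m + 1), (tt v y (v ^ 3 * L) k - rho v w L * tt v y L k) =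
      hh v w L * (XX v y m * (qpoch (v ^ 5 * L) (v ^ 3) m * qpoch (1 / L) (v ^ 3) m /
        (qpoch (v ^ 2 / L) (v ^ 3) m * qpoch (v ^ 7 * L) (v ^ 3) m))) *
        ((1 - v * (v ^ 3) ^ m) ^ 2 * (1 + (v * (v ^ 3) ^ m) ^ 2 - v * (v ^ 3) ^ m * w)) := by
  induction m with
  | zero =>
    simp only [zero_add, Finset.sum_range_one, tt, XX, qp_zero, rho, hh, pow_zero]
    obtain ⟨D, hD⟩ : ∃ D, D = 1 + (v ^ 3 * L) ^ 2 - v ^ 3 * L * w := ⟨_, rfl⟩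
    rw [← hD] at h4 ⊢
    field_simp
    rw [hD]
    ring
  | succ m ih =>
    rw [Finset.sum_range_succ, ih]
    have key := jac_rat v ((v ^ 3) ^ m) L w hv0 h1 h2 h3 h4 (h5 m) (h6 m)
      h8
    have e1 : tt v y (v ^ 3 * L) (m + 1) = (XX v y (m + 1) *
        (qpoch (v ^ 5 * L) (v ^ 3) m * qpoch (1 / L) (v ^ 3) m /
        (qpoch (v ^ 2 / L) (v ^ 3) m * qpoch (v ^ 7 * L) (v ^ 3) m))) *
        ((1 - v ^ 7 * ((v ^ 3) ^ m) ^ 2) / (1 - v) * (v ^ 3 * ((v ^ 3) ^ m)) *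
        ((1 - v ^ 5 * L * ((v ^ 3) ^ m)) * (v ^ 3 * L - 1) /
          (v ^ 2 * (v * L - 1) * (1 - v ^ 7 * L * ((v ^ 3) ^ m))))) := by
      rw [tt, qp_succ' (1 / (v ^ 3 * L)), qp_succ' (v ^ 2 / (v ^ 3 * L)), qp_succ, qp_succ,
        show v ^ 2 * (v ^ 3 * L) = v ^ 5 * L by ring, show v ^ 4 * (v ^ 3 * L) = v ^ 7 * L by ring,
        show 1 / (v ^ 3 * L) * v ^ 3 = 1 / L by field_simp,
        show v ^ 2 / (v ^ 3 * L) * v ^ 3 = v ^ 2 / L by field_simp,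
        show 1 - 1 / (v ^ 3 * L) = (v ^ 3 * L - 1) / (v ^ 3 * L) by field_simp,
        show 1 - v ^ 2 / (v ^ 3 * L) = (v * L - 1) / (v * L) by field_simp]
      rw [pow_succ (v ^ 3) m]
      rw [show 1 - v * ((v ^ 3) ^ m * v ^ 3) ^ 2 = 1 - v ^ 7 * ((v ^ 3) ^ m) ^ 2 by ring]
      exact fld1 _ _ _ _ _ _ _ _ _ _ _ _ _ _ hv0 hL
    have e2 : tt v y L (m + 1) = (XX v y (m + 1) *
        (qpoch (v ^ 5 * L) (v ^ 3) m * qpoch (1 / L) (v ^ 3) m /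
        (qpoch (v ^ 2 / L) (v ^ 3) m * qpoch (v ^ 7 * L) (v ^ 3) m))) *
        ((1 - v ^ 7 * ((v ^ 3) ^ m) ^ 2) / (1 - v) * (v ^ 3 * ((v ^ 3) ^ m)) *
        ((1 - v ^ 2 * L) * (L - ((v ^ 3) ^ m)) / ((L - v ^ 2 * ((v ^ 3) ^ m)) * (1 - v ^ 4 * L)))) := by
      rw [tt, qp_succ' (v ^ 2 * L), qp_succ' (v ^ 4 * L), qp_succ, qp_succ,
        show v ^ 2 * L * v ^ 3 = v ^ 5 * L by ring, show v ^ 4 * L * v ^ 3 = v ^ 7 * L by ring,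
        show 1 - 1 / L * (v ^ 3) ^ m = (L - (v ^ 3) ^ m) / L by field_simp,
        show 1 - v ^ 2 / L * (v ^ 3) ^ m = (L - v ^ 2 * (v ^ 3) ^ m) / L by field_simp]
      rw [pow_succ (v ^ 3) m]
      rw [show 1 - v * ((v ^ 3) ^ m * v ^ 3) ^ 2 = 1 - v ^ 7 * ((v ^ 3) ^ m) ^ 2 by ring]
      exact fld2 _ _ _ _ _ _ _ _ _ _ _ _ _ _ hL
    have e3 : qpoch (v ^ 5 * L) (v ^ 3) (m + 1) * qpoch (1 / L) (v ^ 3) (m + 1) /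
        (qpoch (v ^ 2 / L) (v ^ 3) (m + 1) * qpoch (v ^ 7 * L) (v ^ 3) (m + 1)) =
        qpoch (v ^ 5 * L) (v ^ 3) m * qpoch (1 / L) (v ^ 3) m /
        (qpoch (v ^ 2 / L) (v ^ 3) m * qpoch (v ^ 7 * L) (v ^ 3) m) *
        ((1 - v ^ 5 * L * ((v ^ 3) ^ m)) * (L - ((v ^ 3) ^ m)) /
        ((L - v ^ 2 * ((v ^ 3) ^ m)) * (1 - v ^ 7 * L * ((v ^ 3) ^ m)))) := by
      simp only [qp_succ]
      rw [show 1 - 1 / L * (v ^ 3) ^ m = (L - (v ^ 3) ^ m) / L by field_simp,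
        show 1 - v ^ 2 / L * (v ^ 3) ^ m = (L - v ^ 2 * (v ^ 3) ^ m) / L by field_simp]
      exact fld3 _ _ _ _ _ _ _ _ _ hL
    have e4 : XX v y m *
        ((1 - v * (v ^ 3) ^ m) ^ 2 * (1 + (v * (v ^ 3) ^ m) ^ 2 - v * (v ^ 3) ^ m * w)) =
        XX v y (m + 1) * ((1 - v ^ 3 * (v ^ 3) ^ m) ^ 2 *
        (1 + (v ^ 3 * (v ^ 3) ^ m) ^ 2 - v ^ 3 * (v ^ 3) ^ m * w)) := by
      rw [XX_succ v y w hy hw]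
      have := h9 m
      have := h10 m
      generalize 1 - v * (v ^ 3) ^ m = a at *
      generalize 1 - v ^ 3 * (v ^ 3) ^ m = a1 at *
      generalize 1 + (v * (v ^ 3) ^ m) ^ 2 - v * (v ^ 3) ^ m * w = a2 at *
      generalize 1 + (v ^ 3 * (v ^ 3) ^ m) ^ 2 - v ^ 3 * (v ^ 3) ^ m * w = a3 at *
      field_simp
    rw [e1, e2, e3]
    change _ = _ at key
    rw [← rho, ← hh] at key
    rw [show v * (v ^ 3) ^ (m + 1) = v ^ 4 * (v ^ 3) ^ m by ring]
    generalize qpoch (v ^ 5 * L) (v ^ 3) m * qpoch (1 / L) (v ^ 3) m /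
        (qpoch (v ^ 2 / L) (v ^ 3) m * qpoch (v ^ 7 * L) (v ^ 3) m) = Z at *
    linear_combination (-XX v y (m + 1) * Z) * key + hh v w L * Z * e4

lemma q_ne : q ≠ 0 := RatFunc.X_ne_zero

lemma q_pow_inj {a b : ℕ} (h : q ^ a = q ^ b) : a = b := by
  unfold q at h
  rw [← RatFunc.algebraMap_X, ← map_pow, ← map_pow] at h
  have := RatFunc.algebraMap_injective (K := ℚ) h
  have h2 := congrArg Polynomial.natDegree this
  simpa using h2

lemma q_zpow_ne {a : ℤ} (h : a ≠ 0) : q ^ a ≠ 1 := by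
  intro h1
  rcases Int.eq_nat_or_neg a with ⟨k, rfl | rfl⟩
  · rw [zpow_natCast, ← pow_zero q] at h1
    have := q_pow_inj h1; omega
  · rw [zpow_neg, zpow_natCast, inv_eq_one, ← pow_zero q] at h1
    have := q_pow_inj h1; omega

lemma one_sub_q {a : ℤ} (h : a ≠ 0) : 1 - q ^ a ≠ 0 := fun h1 => q_zpow_ne h (by linear_combination -h1)

lemma one_sub_qn {a : ℕ} (h : a ≠ 0) : 1 - q ^ a ≠ 0 := by
  have := one_sub_q (a := (a : ℤ)) (by omega)
  simpa using this

lemma jackson (y w : RatFunc ℚ) (hy : y ≠ 0) (hw : w = y + 1 / y)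
    (h10 : ∀ k : ℕ, 1 + (q ^ 3 * (q ^ 3) ^ k) ^ 2 - q ^ 3 * (q ^ 3) ^ k * w ≠ 0) (N : ℕ) :
    ∑ k ∈ Finset.range (N + 1), tt q y ((q ^ 3) ^ N) k =
      ∏ i ∈ Finset.range N, rho q w ((q ^ 3) ^ i) := by
  have h1 : 1 - q ≠ 0 := by simpa using one_sub_qn (a := 1) (by norm_num)
  induction N with
  | zero => simp [tt, XX, qp_zero, h1]
  | succ N ih =>
    have key := jac_tele q y w ((q ^ 3) ^ N) hy hw (pow_ne_zero _ (pow_ne_zero _ q_ne)) q_ne h1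
      (by rw [show q * (q ^ 3) ^ N = q ^ (1 + 3 * N) by ring]; exact one_sub_qn (by omega))
      (by rw [show q ^ 3 * (q ^ 3) ^ N = q ^ (3 + 3 * N) by ring]; exact one_sub_qn (by omega))
      (h10 N)
      (by
        intro k h
        rw [← pow_mul, ← pow_mul, ← pow_add, sub_eq_zero] at h
        have := q_pow_inj h
        omega)
      (by
        intro k
        rw [show q ^ 7 * (q ^ 3) ^ N * (q ^ 3) ^ k = q ^ (7 + 3 * N + 3 * k) by ring]
        exact one_sub_qn (by omega))
      (by rw [show q ^ 4 * (q ^ 3) ^ N = q ^ (4 + 3 * N) by ring]; exact one_sub_qn (by omega))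
      (by
        intro k
        rw [show q ^ 3 * (q ^ 3) ^ k = q ^ (3 + 3 * k) by ring]; exact one_sub_qn (by omega))
      h10 (N + 1)
    have z : 1 - 1 / (q ^ 3) ^ N * (q ^ 3) ^ N = 0 := by
      have : (q ^ 3) ^ N ≠ 0 := pow_ne_zero _ (pow_ne_zero _ q_ne)
      field_simp
      ring
    have z1 : qpoch (1 / (q ^ 3) ^ N) (q ^ 3) (N + 1) = 0 := by
      rw [qp_succ, z, mul_zero]
    rw [z1, Finset.sum_sub_distrib, ← Finset.mul_sum,
      Finset.sum_range_succ (fun k => tt q y ((q ^ 3) ^ N) k), ih] at key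
    have z2 : tt q y ((q ^ 3) ^ N) (N + 1) = 0 := by
      rw [tt, z1]; ring
    rw [z2] at key
    rw [Finset.prod_range_succ, pow_succ', ]
    linear_combination key

lemma alg_zero_iff {r : Polynomial ℚ} :
    algebraMap (Polynomial ℚ) (RatFunc ℚ) r = 0 ↔ r = 0 :=
  map_eq_zero_iff _ (RatFunc.algebraMap_injective (K := ℚ))

def Ev (z : ℂ) (f : RatFunc ℚ) (c : ℂ) : Prop :=
  ∃ r s : Polynomial ℚ, Polynomial.aeval z s ≠ 0 ∧
    f * algebraMap (Polynomial ℚ) (RatFunc ℚ) s = algebraMap (Polynomial ℚ) (RatFunc ℚ) r ∧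
    c * Polynomial.aeval z s = Polynomial.aeval z r

namespace Ev

variable {z : ℂ}

lemma of_eq {f : RatFunc ℚ} {c c' : ℂ} (h : Ev z f c) (e : c = c') : Ev z f c' := e ▸ h

lemma of_poly (r : Polynomial ℚ) :
    Ev z (algebraMap (Polynomial ℚ) (RatFunc ℚ) r) (Polynomial.aeval z r) :=
  ⟨r, 1, by simp, by simp, by simp⟩

lemma one : Ev z 1 1 := by simpa using of_poly (z := z) 1

lemma zero : Ev z 0 0 := by simpa using of_poly (z := z) 0

lemma qq : Ev z q z := by simpa [q] using of_poly (z := z) Polynomial.X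

lemma add {f g : RatFunc ℚ} {a b : ℂ} (hf : Ev z f a) (hg : Ev z g b) : Ev z (f + g) (a + b) := by
  obtain ⟨r, s, h1, h2, h3⟩ := hf
  obtain ⟨r', s', h1', h2', h3'⟩ := hg
  refine ⟨r * s' + r' * s, s * s', by simp [h1, h1'], ?_, ?_⟩
  · simp only [map_add, map_mul, ← h2, ← h2']; ring
  · simp only [map_add, map_mul, ← h3, ← h3']; ring

lemma mul {f g : RatFunc ℚ} {a b : ℂ} (hf : Ev z f a) (hg : Ev z g b) : Ev z (f * g) (a * b) := by
  obtain ⟨r, s, h1, h2, h3⟩ := hf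
  obtain ⟨r', s', h1', h2', h3'⟩ := hg
  refine ⟨r * r', s * s', by simp [h1, h1'], ?_, ?_⟩
  · simp only [map_mul, ← h2, ← h2']; ring
  · simp only [map_mul, ← h3, ← h3']; ring

lemma neg {f : RatFunc ℚ} {a : ℂ} (hf : Ev z f a) : Ev z (-f) (-a) := by
  obtain ⟨r, s, h1, h2, h3⟩ := hf
  refine ⟨-r, s, h1, ?_, ?_⟩
  · simp only [map_neg, ← h2]; ring
  · simp only [map_neg, ← h3]; ring

lemma sub {f g : RatFunc ℚ} {a b : ℂ} (hf : Ev z f a) (hg : Ev z g b) : Ev z (f - g) (a - b) := by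
  rw [sub_eq_add_neg, sub_eq_add_neg]; exact hf.add hg.neg

lemma two : Ev z 2 2 := by
  have := (one (z := z)).add one
  norm_num at this
  exact this

lemma inv {f : RatFunc ℚ} {a : ℂ} (hf : Ev z f a) (ha : a ≠ 0) : Ev z f⁻¹ a⁻¹ := by
  obtain ⟨r, s, h1, h2, h3⟩ := hf
  have hr : Polynomial.aeval z r ≠ 0 := by rw [← h3]; exact mul_ne_zero ha h1
  have hr0 : algebraMap (Polynomial ℚ) (RatFunc ℚ) r ≠ 0 := by
    intro h
    apply hr
    rw [alg_zero_iff] at h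
    simp [h]
  have hf0 : f ≠ 0 := by rintro rfl; apply hr0; rw [← h2, zero_mul]
  refine ⟨s, r, hr, ?_, ?_⟩
  · rw [← h2]; field_simp
  · rw [← h3]; field_simp

lemma div {f g : RatFunc ℚ} {a b : ℂ} (hf : Ev z f a) (hg : Ev z g b) (hb : b ≠ 0) :
    Ev z (f / g) (a / b) := by
  rw [div_eq_mul_inv, div_eq_mul_inv]; exact hf.mul (hg.inv hb)

lemma pow {f : RatFunc ℚ} {a : ℂ} (hf : Ev z f a) (k : ℕ) : Ev z (f ^ k) (a ^ k) := by
  induction k with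
  | zero => simpa using one
  | succ k ih => rw [pow_succ, pow_succ]; exact ih.mul hf

lemma zpow {f : RatFunc ℚ} {a : ℂ} (hf : Ev z f a) (ha : a ≠ 0) (k : ℤ) : Ev z (f ^ k) (a ^ k) := by
  rcases Int.eq_nat_or_neg k with ⟨k, rfl | rfl⟩
  · simpa using hf.pow k
  · simpa using (hf.pow k).inv (pow_ne_zero _ ha)

lemma sum {f : ℕ → RatFunc ℚ} {a : ℕ → ℂ} (s : Finset ℕ) (h : ∀ i ∈ s, Ev z (f i) (a i)) :
    Ev z (∑ i ∈ s, f i) (∑ i ∈ s, a i) := by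
  induction s using Finset.induction_on with
  | empty => simpa using zero
  | insert i s hi ih =>
    rw [Finset.sum_insert hi, Finset.sum_insert hi]
    exact (h i (Finset.mem_insert_self _ _)).add
      (ih fun j hj => h j (Finset.mem_insert_of_mem hj))

lemma prod {f : ℕ → RatFunc ℚ} {a : ℕ → ℂ} (s : Finset ℕ) (h : ∀ i ∈ s, Ev z (f i) (a i)) :
    Ev z (∏ i ∈ s, f i) (∏ i ∈ s, a i) := by
  induction s using Finset.induction_on with
  | empty => simpa using one
  | insert i s hi ih =>
    rw [Finset.prod_insert hi, Finset.prod_insert hi]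
    exact (h i (Finset.mem_insert_self _ _)).mul
      (ih fun j hj => h j (Finset.mem_insert_of_mem hj))

end Ev

/-- local integrality -/
def Itg (z : ℂ) (f : RatFunc ℚ) : Prop := ∃ c, Ev z f c

namespace Itg
variable {z : ℂ}
lemma mul {f g : RatFunc ℚ} (hf : Itg z f) (hg : Itg z g) : Itg z (f * g) := by
  obtain ⟨a, ha⟩ := hf; obtain ⟨b, hb⟩ := hg; exact ⟨_, ha.mul hb⟩
lemma add {f g : RatFunc ℚ} (hf : Itg z f) (hg : Itg z g) : Itg z (f + g) := by
  obtain ⟨a, ha⟩ := hf; obtain ⟨b, hb⟩ := hg; exact ⟨_, ha.add hb⟩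
lemma sub {f g : RatFunc ℚ} (hf : Itg z f) (hg : Itg z g) : Itg z (f - g) := by
  obtain ⟨a, ha⟩ := hf; obtain ⟨b, hb⟩ := hg; exact ⟨_, ha.sub hb⟩
lemma pow {f : RatFunc ℚ} (hf : Itg z f) (k : ℕ) : Itg z (f ^ k) := by
  obtain ⟨a, ha⟩ := hf; exact ⟨_, ha.pow k⟩
lemma sum {f : ℕ → RatFunc ℚ} (s : Finset ℕ) (h : ∀ i ∈ s, Itg z (f i)) :
    Itg z (∑ i ∈ s, f i) := by
  induction s using Finset.induction_on with
  | empty => exact ⟨0, by simpa using Ev.zero⟩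
  | insert i s hi ih =>
    rw [Finset.sum_insert hi]
    exact (h i (Finset.mem_insert_self _ _)).add
      (ih fun j hj => h j (Finset.mem_insert_of_mem hj))
end Itg

lemma Ev.dvd {z : ℂ} {d : ℕ} (hd : 0 < d) (hz : IsPrimitiveRoot z d) {f : RatFunc ℚ}
    (h : Ev z f 0) : ∃ g, Itg z g ∧
      f = algebraMap (Polynomial ℚ) (RatFunc ℚ) (Polynomial.cyclotomic d ℚ) * g := by
  obtain ⟨r, s, h1, h2, h3⟩ := h
  rw [zero_mul] at h3
  have : Polynomial.cyclotomic d ℚ ∣ r := by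
    rw [Polynomial.cyclotomic_eq_minpoly_rat hz hd]
    exact minpoly.dvd ℚ z h3.symm
  obtain ⟨r', rfl⟩ := this
  have hs0 : algebraMap (Polynomial ℚ) (RatFunc ℚ) s ≠ 0 := by
    intro h
    apply h1
    rw [alg_zero_iff] at h
    simp [h]
  refine ⟨algebraMap (Polynomial ℚ) (RatFunc ℚ) r' / algebraMap (Polynomial ℚ) (RatFunc ℚ) s,
    ⟨_, (Ev.of_poly r').div (Ev.of_poly s) h1⟩, ?_⟩
  rw [← mul_div_assoc, ← map_mul, ← h2]
  field_simp

lemma cyc_dvd {z : ℂ} {d e : ℕ} (hd : 0 < d) (hz : IsPrimitiveRoot z d) {f g : RatFunc ℚ}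
    (he : 0 < e) (hg : Itg z g)
    (h : f = algebraMap (Polynomial ℚ) (RatFunc ℚ) (Polynomial.cyclotomic d ℚ) ^ e * g) :
    Polynomial.cyclotomic d ℚ ^ e ∣ f.num ∧ IsCoprime (Polynomial.cyclotomic d ℚ) f.denom := by
  obtain ⟨c, r, s, h1, h2, -⟩ := hg
  have hirr := Polynomial.cyclotomic.irreducible_rat hd
  have hs : IsCoprime (Polynomial.cyclotomic d ℚ) s := by
    rw [hirr.coprime_iff_not_dvd]
    rintro ⟨t, rfl⟩
    apply h1
    rw [map_mul, Polynomial.cyclotomic_eq_minpoly_rat hz hd, minpoly.aeval, zero_mul]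
  have e1 : f.num * s = Polynomial.cyclotomic d ℚ ^ e * (r * f.denom) := by
    apply RatFunc.algebraMap_injective (K := ℚ)
    simp only [map_mul, map_pow]
    have hd0 : algebraMap (Polynomial ℚ) (RatFunc ℚ) f.denom ≠ 0 := by
      rw [Ne, alg_zero_iff]; exact f.denom_ne_zero
    have e2 : algebraMap (Polynomial ℚ) (RatFunc ℚ) f.num =
        f * algebraMap (Polynomial ℚ) (RatFunc ℚ) f.denom := by
      conv_rhs => rw [← RatFunc.num_div_denom f]
      rw [RatFunc.num_div_denom f]
      have := RatFunc.num_div_denom f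
      rw [div_eq_iff hd0] at this
      exact this
    rw [e2, ← h2]
    linear_combination (algebraMap (Polynomial ℚ) (RatFunc ℚ) f.denom *
      algebraMap (Polynomial ℚ) (RatFunc ℚ) s) * h
  have e3 : Polynomial.cyclotomic d ℚ ^ e ∣ f.num :=
    (hs.pow_left).dvd_of_dvd_mul_right (Dvd.intro _ e1.symm)
  refine ⟨e3, ?_⟩
  exact (RatFunc.isCoprime_num_denom f).of_isCoprime_of_dvd_left
    (dvd_trans (dvd_pow_self _ he.ne') e3)

lemma qcong_of {n : ℕ} (hn : 1 < n) {f g : RatFunc ℚ}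
    (H : ∀ d ∈ n.divisors.erase 1, ∃ z : ℂ, IsPrimitiveRoot z d ∧ ∃ h, Itg z h ∧
      f - g = algebraMap (Polynomial ℚ) (RatFunc ℚ) (Polynomial.cyclotomic d ℚ) ^
        (if d = n then 5 else 1) * h) :
    qcong f g ((∑ i ∈ Finset.range n, Polynomial.X ^ i) * Polynomial.cyclotomic n ℚ ^ 4) := by
  set F := f - g with hF
  have hmem : n ∈ n.divisors.erase 1 := by simp; omega
  have hP : (∑ i ∈ Finset.range n, Polynomial.X ^ i) * Polynomial.cyclotomic n ℚ ^ 4 =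
      ∏ d ∈ n.divisors.erase 1, Polynomial.cyclotomic d ℚ ^ (if d = n then 5 else 1) := by
    rw [← Polynomial.prod_cyclotomic_eq_geom_sum (by omega), ← Finset.mul_prod_erase _ _ hmem,
      ← Finset.mul_prod_erase _ _ hmem, if_pos rfl]
    rw [Finset.prod_congr rfl (g := fun d => Polynomial.cyclotomic d ℚ)
      (s₂ := (n.divisors.erase 1).erase n)
      (f := fun d => Polynomial.cyclotomic d ℚ ^ (if d = n then 5 else 1))]
    · ring
    · intro x hx
      rw [if_neg (Finset.ne_of_mem_erase hx), pow_one]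
  have H2 : ∀ d ∈ n.divisors.erase 1,
      Polynomial.cyclotomic d ℚ ^ (if d = n then 5 else 1) ∣ F.num ∧
      IsCoprime (Polynomial.cyclotomic d ℚ) F.denom := by
    intro d hd
    obtain ⟨z, hz, h, hh, e⟩ := H d hd
    exact cyc_dvd (Nat.pos_of_mem_divisors (Finset.mem_of_mem_erase hd)) hz
      (by split_ifs <;> norm_num) hh e
  have d1 : (∏ d ∈ n.divisors.erase 1, Polynomial.cyclotomic d ℚ ^ (if d = n then 5 else 1)) ∣
      F.num := by
    apply Finset.prod_dvd_of_coprime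
    · intro a _ b _ hab
      exact (Polynomial.cyclotomic.isCoprime_rat hab).pow
    · intro d hd
      exact (H2 d hd).1
  obtain ⟨r, hr⟩ := d1
  refine ⟨r, F.denom, ?_, ?_⟩
  · rw [hP]
    apply IsCoprime.prod_right
    intro d hd
    exact ((H2 d hd).2.symm).pow_right
  · rw [hP, ← mul_div_assoc, ← map_mul, ← hr, RatFunc.num_div_denom]

noncomputable def av (z : ℂ) (k : ℕ) : ℂ :=
  ∏ i ∈ Finset.range k, ((1 - z ^ (3 * i + 1)) / (1 - z ^ (3 * i + 3)))

noncomputable def sv (z : ℂ) (k : ℕ) : ℂ :=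
  ∑ i ∈ Finset.range k, (z ^ (3 * i + 1) / (1 - z ^ (3 * i + 1)) ^ 2 -
    z ^ (3 * i + 3) / (1 - z ^ (3 * i + 3)) ^ 2)


lemma av_rev {z : ℂ} {N : ℕ} (hN : z ^ (3 * N + 1) = 1)
    (h1 : ∀ i < N, z ^ (3 * i + 1) ≠ 1) (h3 : ∀ i < N, z ^ (3 * i + 3) ≠ 1) (k : ℕ) :
    ∀ j, k + j = N → av z j = av z N * z ^ (2 * k) * av z k := by
  have z0 : z ≠ 0 := by rintro rfl; simp at hN
  induction k with
  | zero => intro j hj; simp at hj; subst hj; simp [av]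
  | succ k ih =>
    intro j hj
    have := ih (j + 1) (by omega)
    rw [av, Finset.prod_range_succ, ← av] at this
    rw [av.eq_1 z (k + 1), Finset.prod_range_succ, ← av]
    have a1 := h1 k (by omega)
    have a2 := h3 k (by omega)
    have b1 := h1 j (by omega)
    have b2 := h3 j (by omega)
    have c1 : z ^ (3 * j + 1) * z ^ (3 * k + 3) = 1 := by
      rw [← pow_add, ← hN]; congr 1; omega
    have c2 : z ^ (3 * j + 3) * z ^ (3 * k + 1) = 1 := by
      rw [← pow_add, ← hN]; congr 1; omega
    have c3 : z ^ (3 * k + 3) = z ^ (3 * k + 1) * z ^ 2 := by ring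
    have k0 : z ^ (3 * k + 1) ≠ 0 := pow_ne_zero _ z0
    have k2 : z ^ (3 * k + 3) ≠ 0 := pow_ne_zero _ z0
    rw [show 2 * (k + 1) = 2 * k + 2 by ring, pow_add]
    generalize z ^ (3 * j + 1) = J1 at *
    generalize z ^ (3 * j + 3) = J3 at *
    generalize z ^ (3 * k + 1) = K1 at *
    generalize z ^ (3 * k + 3) = K3 at *
    have a1' : 1 - K1 ≠ 0 := sub_ne_zero.2 (Ne.symm a1)
    have a2' : 1 - K3 ≠ 0 := sub_ne_zero.2 (Ne.symm a2)
    have b1' : 1 - J1 ≠ 0 := sub_ne_zero.2 (Ne.symm b1)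
    have b2' : 1 - J3 ≠ 0 := sub_ne_zero.2 (Ne.symm b2)
    have r : (1 - J1) / (1 - J3) * (z ^ 2 * ((1 - K1) / (1 - K3))) = 1 := by
      rw [eq_div_of_mul_eq k2 c1, eq_div_of_mul_eq k0 c2] at *
      have d1 : (1 : ℂ) - 1 / K3 = -(1 - K3) / K3 := by field_simp; ring
      have d2 : (1 : ℂ) - 1 / K1 = -(1 - K1) / K1 := by field_simp; ring
      rw [d1, d2]
      field_simp
      rw [c3]
    calc av z j = av z j * ((1 - J1) / (1 - J3) * (z ^ 2 * ((1 - K1) / (1 - K3)))) := by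
          rw [r, mul_one]
      _ = (av z j * ((1 - J1) / (1 - J3))) * (z ^ 2 * ((1 - K1) / (1 - K3))) := by ring
      _ = _ := by rw [this]; ring

lemma xrev {J K : ℂ} (h : J * K = 1) : J / (1 - J) ^ 2 = K / (1 - K) ^ 2 := by
  have K0 : K ≠ 0 := by rintro rfl; simp at h
  rw [eq_div_of_mul_eq K0 h]
  by_cases hK : K = 1
  · simp [hK]
  have : 1 - K ≠ 0 := sub_ne_zero.2 (Ne.symm hK)
  have d1 : (1 : ℂ) - 1 / K = -(1 - K) / K := by field_simp; ring
  rw [d1]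
  field_simp

lemma sv_rev {z : ℂ} {N : ℕ} (hN : z ^ (3 * N + 1) = 1) (k : ℕ) :
    ∀ j, k + j = N → sv z j = sv z N + sv z k := by
  induction k with
  | zero => intro j hj; simp at hj; subst hj; simp [sv]
  | succ k ih =>
    intro j hj
    have := ih (j + 1) (by omega)
    rw [sv, Finset.sum_range_succ, ← sv] at this
    rw [sv.eq_1 z (k + 1), Finset.sum_range_succ, ← sv]
    have c1 : z ^ (3 * j + 1) * z ^ (3 * k + 3) = 1 := by
      rw [← pow_add, ← hN]; congr 1; omega
    have c2 : z ^ (3 * j + 3) * z ^ (3 * k + 1) = 1 := by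
      rw [← pow_add, ← hN]; congr 1; omega
    linear_combination this - xrev c1 + xrev c2

lemma sv_sym {z : ℂ} {N : ℕ} (hN : z ^ (3 * N + 1) = 1) (k j : ℕ) (h : k + j = N) :
    sv z j = sv z k := by
  have h1 := sv_rev hN N 0 (by simp)
  have h2 := sv_rev hN k j h
  have h0 : sv z 0 = 0 := by simp [sv]
  rw [h0] at h1
  linear_combination h2 - h1 / 2

lemma sum_rev {z : ℂ} {N : ℕ} (hN : z ^ (3 * N + 1) = 1)
    (h1 : ∀ i < N, z ^ (3 * i + 1) ≠ 1) (h3 : ∀ i < N, z ^ (3 * i + 3) ≠ 1) (w : ℕ → ℂ)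
    (hw : ∀ k j, k + j = N → w j = w k) :
    ∑ k ∈ Finset.range (N + 1),
      (1 - z ^ (6 * k + 1)) / (1 - z) * av z k ^ 6 * z ^ (3 * k) * w k = 0 := by
  have z0 : z ≠ 0 := by rintro rfl; simp at hN
  have hA : av z N ^ 6 = z ^ 2 := by
    have := av_rev hN h1 h3 N 0 (by simp)
    have h0 : av z 0 = 1 := by simp [av]
    rw [h0] at this
    have e1 : z ^ (6 * N) * z ^ 2 = 1 := by
      rw [← pow_add, show 6 * N + 2 = (3 * N + 1) * 2 by ring, pow_mul, hN, one_pow]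
    have e2 : av z N ^ 6 * z ^ (6 * N) = 1 := by
      calc _ = (av z N * z ^ (2 * N) * av z N) ^ 3 := by ring
        _ = 1 := by rw [← this, one_pow]
    have e3 : z ^ (6 * N) ≠ 0 := pow_ne_zero _ z0
    apply mul_right_cancel₀ e3
    linear_combination e2 - e1
  have key : ∀ k j, k + j = N →
      (1 - z ^ (6 * j + 1)) / (1 - z) * av z j ^ 6 * z ^ (3 * j) * w j =
      -((1 - z ^ (6 * k + 1)) / (1 - z) * av z k ^ 6 * z ^ (3 * k) * w k) := by
    intro k j h
    rw [av_rev hN h1 h3 k j h, hw k j h, mul_pow, mul_pow, hA]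
    have e1 : z ^ (6 * j + 1) * z ^ (6 * k + 1) = 1 := by
      rw [← pow_add, show 6 * j + 1 + (6 * k + 1) = (3 * N + 1) * 2 by omega, pow_mul, hN, one_pow]
    have e2 : z ^ (3 * j) * z ^ (3 * k + 1) = 1 := by
      rw [← pow_add, ← hN]; congr 1; omega
    have e3 : (1 - z ^ (6 * j + 1)) * (z ^ 2 * (z ^ (2 * k)) ^ 6) * z ^ (3 * j) =
        - (1 - z ^ (6 * k + 1)) * z ^ (3 * k) := by
      have p1 : z ^ 2 * (z ^ (2 * k)) ^ 6 = z ^ (6 * k + 1) * z ^ (3 * k + 1) * z ^ (3 * k) := by ring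
      rw [p1]
      generalize z ^ (6 * j + 1) = a at *
      generalize z ^ (6 * k + 1) = b at *
      generalize z ^ (3 * j) = c at *
      generalize z ^ (3 * k + 1) = d at *
      linear_combination (z ^ (3 * k) * b - z ^ (3 * k) * (a * b)) * e2 - z ^ (3 * k) * e1
    rw [show (1 - z ^ (6 * j + 1)) / (1 - z) * (z ^ 2 * (z ^ (2 * k)) ^ 6 * av z k ^ 6) *
      z ^ (3 * j) * w k = ((1 - z ^ (6 * j + 1)) * (z ^ 2 * (z ^ (2 * k)) ^ 6) * z ^ (3 * j)) *
      (av z k ^ 6 / (1 - z) * w k) by ring, e3]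
    ring
  have h := Finset.sum_range_reflect
    (fun k => (1 - z ^ (6 * k + 1)) / (1 - z) * av z k ^ 6 * z ^ (3 * k) * w k) (N + 1)
  have h' : ∑ k ∈ Finset.range (N + 1),
      (1 - z ^ (6 * k + 1)) / (1 - z) * av z k ^ 6 * z ^ (3 * k) * w k =
      - ∑ k ∈ Finset.range (N + 1),
      (1 - z ^ (6 * k + 1)) / (1 - z) * av z k ^ 6 * z ^ (3 * k) * w k := by
    rw [← Finset.sum_neg_distrib]
    conv_lhs => rw [← h]
    apply Finset.sum_congr rfl
    intro k hk
    rw [Finset.mem_range] at hk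
    exact key k (N + 1 - 1 - k) (by omega)
  linear_combination h' / 2


noncomputable def AC (c k : ℕ) : RatFunc ℚ :=
  ∏ i ∈ Finset.range k, ((1 - q ^ (3 * i + c)) / (1 - q ^ (3 * i + 3)))

noncomputable def cc (k : ℕ) : RatFunc ℚ :=
  (1 - q ^ (6 * k + 1)) / (1 - q) * AC 1 k ^ 6 * q ^ (3 * k)

lemma qp_div (c k : ℕ) : qpoch (q ^ c) (q ^ 3) k / qpoch (q ^ 3) (q ^ 3) k = AC c k := by
  rw [qpoch, qpoch, ← Finset.prod_div_distrib, AC]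
  apply Finset.prod_congr rfl
  intro i _
  rw [← pow_mul, ← pow_add, ← pow_add, add_comm c, add_comm 3 (3 * i)]

lemma qint_nat (m : ℕ) : qint (m : ℤ) = (1 - q ^ m) / (1 - q) := by
  rw [qint, zpow_natCast]

lemma cc_eq (k : ℕ) : qint (6 * k + 1) *
    (qpoch q (q ^ 3) k ^ 6 / qpoch (q ^ 3) (q ^ 3) k ^ 6) * q ^ (3 * k) = cc k := by
  rw [cc, ← qp_div, pow_one, div_pow, ← qint_nat]
  push_cast
  rfl

lemma AC_add (c s r : ℕ) : AC c (s + r) = AC c s *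
    ∏ i ∈ Finset.range r, ((1 - q ^ (3 * (s + i) + c)) / (1 - q ^ (3 * (s + i) + 3))) := by
  rw [AC, Finset.prod_range_add, ← AC]

lemma ev_os {z : ℂ} (m : ℕ) : Ev z (1 - q ^ m) (1 - z ^ m) := Ev.one.sub (Ev.qq.pow m)

lemma os_ne {z : ℂ} {m : ℕ} (h : z ^ m ≠ 1) : 1 - z ^ m ≠ 0 := sub_ne_zero.2 (Ne.symm h)

lemma dvd_three {d N m : ℕ} (hd : d ∣ 3 * N + 1) (h : d ∣ 3 * m) : d ∣ m := by
  have : (3 * N + 1) * m - N * (3 * m) = m := by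
    rw [Nat.sub_eq_iff_eq_add]
    · ring
    · nlinarith
  rw [← this]
  exact Nat.dvd_sub (hd.mul_right m) (h.mul_left N)

lemma z_three {z : ℂ} {d N i : ℕ} (hz : IsPrimitiveRoot z d) (hd : d ∣ 3 * N + 1) (hi : i + 1 < d) :
    z ^ (3 * i + 3) ≠ 1 := by
  rw [Ne, hz.pow_eq_one_iff_dvd]
  intro h
  have := Nat.le_of_dvd (by omega) (dvd_three (m := i + 1) hd (by rwa [mul_add, mul_one]))
  omega

lemma z_red {z : ℂ} {d m i c : ℕ} (hz : IsPrimitiveRoot z d) :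
    z ^ (3 * (d * m + i) + c) = z ^ (3 * i + c) := by
  rw [show 3 * (d * m + i) + c = d * (3 * m) + (3 * i + c) by ring, pow_add, pow_mul, hz.pow_eq_one,
    one_pow, one_mul]

lemma ratio_itg {z : ℂ} {d a b : ℕ} (hd : 0 < d) (hz : IsPrimitiveRoot z d) (ha : d ∣ a) (hb : b ≠ 0) :
    Itg z ((1 - q ^ a) / (1 - q ^ b)) := by
  by_cases h : d ∣ b
  · obtain ⟨a', rfl⟩ := ha
    obtain ⟨b', rfl⟩ := h
    rw [pow_mul, pow_mul, ← mul_neg_geom_sum (q ^ d) a', ← mul_neg_geom_sum (q ^ d) b',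
      mul_div_mul_left _ _ (one_sub_qn hd.ne')]
    refine ⟨_, Ev.div (Ev.sum _ fun i _ => (Ev.qq.pow d).pow i)
      (Ev.sum _ fun i _ => (Ev.qq.pow d).pow i) ?_⟩
    simp only [hz.pow_eq_one, one_pow, Finset.sum_const, Finset.card_range, nsmul_eq_mul, mul_one]
    intro h
    apply hb
    simp only [Nat.cast_eq_zero] at h
    simp [h]
  · exact ⟨_, (ev_os a).div (ev_os b) (os_ne (by rwa [Ne, hz.pow_eq_one_iff_dvd]))⟩

lemma part_ev {z : ℂ} {d N r c m : ℕ} (hz : IsPrimitiveRoot z d) (hd : d ∣ 3 * N + 1)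
    (hr : r < d) :
    Ev z (∏ i ∈ Finset.range r, ((1 - q ^ (3 * (d * m + i) + c)) / (1 - q ^ (3 * (d * m + i) + 3))))
      (∏ i ∈ Finset.range r, ((1 - z ^ (3 * i + c)) / (1 - z ^ (3 * i + 3)))) := by
  apply Ev.prod
  intro i hi
  rw [Finset.mem_range] at hi
  rw [← z_red (m := m) (c := c) hz, ← z_red (m := m) (c := 3) hz]
  apply (ev_os _).div (ev_os _) (os_ne _)
  rw [z_red hz]
  exact z_three hz hd (by omega)

lemma block_itg {z : ℂ} {d N c m : ℕ} (hd0 : 0 < d) (hz : IsPrimitiveRoot z d) (hd : d ∣ 3 * N + 1) :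
    Itg z (∏ i ∈ Finset.range d,
      ((1 - q ^ (3 * (d * m + i) + c)) / (1 - q ^ (3 * (d * m + i) + 3)))) := by
  obtain ⟨e, rfl⟩ : ∃ e, d = e + 1 := ⟨d - 1, by omega⟩
  set i0 := (N * c) % (e + 1) with hi0
  have hi0' : i0 ∈ Finset.range (e + 1) := Finset.mem_range.2 (Nat.mod_lt _ hd0)
  have hdv : (e + 1) ∣ 3 * ((e + 1) * m + i0) + c := by
    have h1 : (e + 1) ∣ (3 * N + 1) * c := hd.mul_right c
    have h2 := Nat.mod_add_div (N * c) (e + 1)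
    rw [← hi0] at h2
    have h3 : (3 * N + 1) * c + (e + 1) * (3 * m) =
      3 * ((e + 1) * m + i0) + c + (e + 1) * (3 * (N * c / (e + 1))) := by
      linear_combination 3 * h2.symm
    have h4 : (e + 1) ∣ 3 * ((e + 1) * m + i0) + c + (e + 1) * (3 * (N * c / (e + 1))) := by
      rw [← h3]; exact dvd_add h1 (dvd_mul_right _ _)
    exact (Nat.dvd_add_left (dvd_mul_right _ _)).1 h4
  rw [Finset.prod_div_distrib, Finset.prod_range_succ (fun i => 1 - q ^ (3 * ((e + 1) * m + i) + 3)),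
    ← Finset.mul_prod_erase _ _ hi0', mul_comm (∏ i ∈ Finset.range e, _), mul_div_mul_comm]
  refine (ratio_itg hd0 hz hdv (by omega)).mul ⟨_, Ev.div (Ev.prod _ fun i _ => ev_os _)
    (Ev.prod _ fun i _ => ev_os _) ?_⟩
  rw [Finset.prod_ne_zero_iff]
  intro i hi
  rw [Finset.mem_range] at hi
  apply os_ne
  rw [z_red hz]
  exact z_three hz hd (by omega)

lemma AC_itg0 {z : ℂ} {d N : ℕ} (c m : ℕ) (hd0 : 0 < d) (hz : IsPrimitiveRoot z d)
    (hd : d ∣ 3 * N + 1) : Itg z (AC c (d * m)) := by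
  induction m with
  | zero => exact ⟨1, by simpa [AC] using Ev.one⟩
  | succ m ih =>
    rw [mul_add, mul_one, AC_add]
    exact ih.mul (block_itg hd0 hz hd)

lemma AC_itg {z : ℂ} {d N : ℕ} (c k : ℕ) (hd0 : 0 < d) (hz : IsPrimitiveRoot z d)
    (hd : d ∣ 3 * N + 1) : Itg z (AC c k) := by
  rw [← Nat.div_add_mod k d, AC_add]
  exact (AC_itg0 c _ hd0 hz hd).mul ⟨_, part_ev hz hd (Nat.mod_lt _ hd0)⟩

lemma AC1_ev {z : ℂ} {d N : ℕ} (m : ℕ) (hd0 : 0 < d) (hz : IsPrimitiveRoot z d)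
    (hd : d ∣ 3 * N + 1) : ∃ C, ∀ r < d, Ev z (AC 1 (d * m + r)) (C * av z r) := by
  obtain ⟨C, hC⟩ := AC_itg0 1 m hd0 hz hd
  refine ⟨C, fun r hr => ?_⟩
  rw [AC_add]
  exact hC.mul (part_ev hz hd hr)

lemma z_one {z : ℂ} {d N i : ℕ} (hz : IsPrimitiveRoot z d) (hd : d ∣ 3 * N + 1)
    (hN : N < d) (hi : i < N) : z ^ (3 * i + 1) ≠ 1 := by
  rw [Ne, hz.pow_eq_one_iff_dvd]
  intro h
  have h2 := Nat.dvd_sub hd h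
  rw [show 3 * N + 1 - (3 * i + 1) = 3 * (N - i) by omega] at h2
  have := Nat.le_of_dvd (by omega) (dvd_three hd h2)
  omega

lemma block_zero {z : ℂ} {d N R : ℕ} (m : ℕ) (hd1 : 1 < d) (hz : IsPrimitiveRoot z d)
    (hd : d ∣ 3 * N + 1) (hR : N % d + 1 ≤ R) (hR' : R ≤ d) :
    Ev z (∑ r ∈ Finset.range R, cc (d * m + r)) 0 := by
  have hd0 : 0 < d := by omega
  obtain ⟨C, hC⟩ := AC1_ev m hd0 hz hd
  have hz1 : 1 - z ≠ 0 := by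
    have := hz.ne_one hd1
    exact sub_ne_zero.2 (Ne.symm this)
  set N0 := N % d with hN0
  have hN0d : N0 < d := Nat.mod_lt _ hd0
  have hd' : d ∣ 3 * N0 + 1 := by
    have h2 := Nat.mod_add_div N d
    rw [← hN0] at h2
    have : 3 * N + 1 = 3 * N0 + 1 + d * (3 * (N / d)) := by linear_combination 3 * h2.symm
    rw [this] at hd
    exact (Nat.dvd_add_left (dvd_mul_right _ _)).1 hd
  have hz0 : z ^ (3 * N0 + 1) = 1 := by rwa [hz.pow_eq_one_iff_dvd]
  have h : Ev z (∑ r ∈ Finset.range R, cc (d * m + r))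
      (∑ r ∈ Finset.range R, (1 - z ^ (6 * r + 1)) / (1 - z) * (C * av z r) ^ 6 * z ^ (3 * r)) := by
    apply Ev.sum
    intro r hr
    rw [Finset.mem_range] at hr
    have e1 : z ^ (6 * (d * m + r) + 1) = z ^ (6 * r + 1) := by
      rw [show 6 * (d * m + r) + 1 = d * (6 * m) + (6 * r + 1) by ring, pow_add, pow_mul,
        hz.pow_eq_one, one_pow, one_mul]
    have e2 : z ^ (3 * (d * m + r)) = z ^ (3 * r) := by
      rw [show 3 * (d * m + r) = d * (3 * m) + (3 * r) by ring, pow_add, pow_mul,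
        hz.pow_eq_one, one_pow, one_mul]
    rw [← e1, ← e2]
    refine (((ev_os _).div ?_ hz1).mul ((hC r (by omega)).pow 6)).mul (Ev.qq.pow _)
    simpa using ev_os (z := z) 1
  apply h.of_eq
  have s1 := sum_rev (w := fun _ => C ^ 6) hz0 (fun i hi => z_one hz hd' hN0d hi)
    (fun i hi => z_three hz hd' (by omega)) (fun _ _ _ => rfl)
  rw [← s1]
  have sub : Finset.range (N0 + 1) ⊆ Finset.range R := Finset.range_subset_range.2 hR
  rw [← Finset.sum_subset sub]
  · apply Finset.sum_congr rfl
    intro r _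
    ring
  · intro r _ hr2
    rw [Finset.mem_range, not_lt] at hr2
    have : av z r = 0 := by
      rw [av, Finset.prod_eq_zero (i := N0)]
      · rw [Finset.mem_range]; omega
      · rw [hz0]; simp
    rw [this]; simp

lemma full_zero {z : ℂ} {d N : ℕ} (m : ℕ) (hd1 : 1 < d) (hz : IsPrimitiveRoot z d)
    (hd : d ∣ 3 * N + 1) : Ev z (∑ k ∈ Finset.range (d * m), cc k) 0 := by
  induction m with
  | zero => simpa using Ev.zero
  | succ m ih =>
    rw [mul_add, mul_one, Finset.sum_range_add]
    have := ih.add (block_zero m hd1 hz hd (Nat.mod_lt N (by omega)) le_rfl)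
    simpa using this

lemma lhs_zero {z : ℂ} {d N M : ℕ} (hd1 : 1 < d) (hz : IsPrimitiveRoot z d)
    (hd : d ∣ 3 * N + 1) (hM : M = N ∨ M = 3 * N) :
    Ev z (∑ k ∈ Finset.range (M + 1), cc k) 0 := by
  rcases hM with rfl | rfl
  · rw [← Nat.div_add_mod M d, add_assoc, Finset.sum_range_add]
    have := (full_zero (M / d) hd1 hz hd).add
      (block_zero (M / d) hd1 hz hd le_rfl (Nat.mod_lt M (by omega)))
    simpa using this
  · obtain ⟨e, he⟩ := hd
    rw [he]
    exact full_zero e hd1 hz ⟨e, he⟩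

noncomputable def xq (m : ℕ) : RatFunc ℚ := q ^ m / (1 - q ^ m) ^ 2

noncomputable def ee (n : ℕ) : RatFunc ℚ := (1 - q ^ n) ^ 2 / q ^ n

noncomputable def be (n c k : ℕ) : RatFunc ℚ :=
  ∏ i ∈ Finset.range k, ((1 - ee n * xq (3 * i + c)) / (1 - ee n * xq (3 * i + 3)))

noncomputable def BB (n k : ℕ) : RatFunc ℚ :=
  qpoch (q * q ^ n) (q ^ 3) k * qpoch (q / q ^ n) (q ^ 3) k /
    (qpoch (q ^ 3 * q ^ n) (q ^ 3) k * qpoch (q ^ 3 / q ^ n) (q ^ 3) k)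

lemma pair_id {F : Type*} [Field F] (u Q : F) (hu : 1 - u ≠ 0) (hQ : Q ≠ 0) :
    (1 - u * Q) * (1 - u / Q) = (1 - u) ^ 2 * (1 - (1 - Q) ^ 2 / Q * (u / (1 - u) ^ 2)) := by
  field_simp; ring

lemma pair_q (n m : ℕ) (hm : m ≠ 0) :
    (1 - q ^ m * q ^ n) * (1 - q ^ m / q ^ n) = (1 - q ^ m) ^ 2 * (1 - ee n * xq m) :=
  pair_id _ _ (one_sub_qn hm) (pow_ne_zero _ q_ne)

lemma div_rearr {F : Type*} [Field F] (A B C D a b c d : F) :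
    A * a * (B * b) / (C * c * (D * d)) = A * B / (C * D) * (a * b / (c * d)) := by
  simp only [div_eq_mul_inv, mul_inv]; ring

lemma BB_eq (n k : ℕ) : BB n k = AC 1 k ^ 2 * be n 1 k := by
  induction k with
  | zero => simp [BB, AC, be, qp_zero]
  | succ k ih =>
    rw [BB, qp_succ, qp_succ, qp_succ, qp_succ, div_rearr, ← BB, ih, AC.eq_1 1 (k + 1),
      Finset.prod_range_succ, ← AC, be.eq_1 n 1 (k + 1), Finset.prod_range_succ, ← be,
      show q * q ^ n * (q ^ 3) ^ k = q ^ (3 * k + 1) * q ^ n by ring,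
      show q / q ^ n * (q ^ 3) ^ k = q ^ (3 * k + 1) / q ^ n by ring,
      show q ^ 3 * q ^ n * (q ^ 3) ^ k = q ^ (3 * k + 3) * q ^ n by ring,
      show q ^ 3 / q ^ n * (q ^ 3) ^ k = q ^ (3 * k + 3) / q ^ n by ring,
      pair_q n _ (by omega), pair_q n _ (by omega)]
    simp only [div_eq_mul_inv, mul_inv, mul_pow, inv_pow]; ring

lemma XX_one (k : ℕ) : XX q 1 k = AC 1 k ^ 4 := by
  rw [XX, mul_one, mul_one, div_one, div_one, ← qp_div, pow_one, div_pow]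
  congr 1 <;> ring

lemma XX_Q (n k : ℕ) : XX q (q ^ n) k = AC 1 k ^ 2 * BB n k := by
  rw [XX, mul_div_mul_comm, ← BB, ← qp_div, pow_one, div_pow]

lemma tt_eq (y : RatFunc ℚ) (N k : ℕ) : tt q y ((q ^ 3) ^ N) k =
    (1 - q ^ (6 * k + 1)) / (1 - q) * XX q y k * BB (3 * N + 1) k * q ^ (3 * k) := by
  have hq := q_ne
  rw [tt, BB, show q * ((q ^ 3) ^ k) ^ 2 = q ^ (6 * k + 1) by ring,
    show q ^ 2 * (q ^ 3) ^ N = q * q ^ (3 * N + 1) by ring,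
    show q ^ 4 * (q ^ 3) ^ N = q ^ 3 * q ^ (3 * N + 1) by ring,
    show 1 / (q ^ 3) ^ N = q / q ^ (3 * N + 1) by
      rw [div_eq_div_iff (pow_ne_zero _ (pow_ne_zero _ hq)) (pow_ne_zero _ hq)]; ring,
    show q ^ 2 / (q ^ 3) ^ N = q ^ 3 / q ^ (3 * N + 1) by
      rw [div_eq_div_iff (pow_ne_zero _ (pow_ne_zero _ hq)) (pow_ne_zero _ hq)]; ring,
    mul_comm (qpoch (q ^ 3 / _) _ _), pow_mul]

lemma tt_one (N k : ℕ) : tt q 1 ((q ^ 3) ^ N) k = cc k * be (3 * N + 1) 1 k := by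
  rw [tt_eq, XX_one, BB_eq, cc]; ring

lemma tt_Q (N k : ℕ) : tt q (q ^ (3 * N + 1)) ((q ^ 3) ^ N) k = cc k * be (3 * N + 1) 1 k ^ 2 := by
  rw [tt_eq, XX_Q, BB_eq, cc]; ring

lemma prod_tel (N : ℕ) : ∏ i ∈ Finset.range N, ((1 - q ^ (3 * i + 4)) / (1 - q ^ (3 * i + 1))) =
    (1 - q ^ (3 * N + 1)) / (1 - q) := by
  have h1 : 1 - q ≠ 0 := by simpa using one_sub_qn (a := 1) (by norm_num)
  induction N with
  | zero => simp [h1]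
  | succ N ih =>
    rw [Finset.prod_range_succ, ih, show 3 * (N + 1) + 1 = 3 * N + 4 by ring]
    have := one_sub_qn (a := 3 * N + 1) (by omega)
    rw [div_mul_div_comm, mul_comm (1 - q), mul_div_mul_left _ _ this]

lemma rho_fld {F : Type*} [Field F] (a b c d f g : F) :
    a * b * (b ^ 2 * f) / (c * (c ^ 2 * g) * d) = a / d * (b / c) ^ 3 * (f / g) := by
  simp only [div_eq_mul_inv, mul_inv, mul_pow, inv_pow]; ring

lemma rho_fld1 {F : Type*} [Field F] (a b c d : F) :
    a * b * (b * b) / (c * (c * c) * d) = a / d * (b / c) ^ 3 := by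
  simp only [div_eq_mul_inv, mul_inv, mul_pow, inv_pow]; ring

lemma rho_one (i : ℕ) : rho q (1 + 1 / 1) ((q ^ 3) ^ i) =
    (1 - q ^ (3 * i + 4)) / (1 - q ^ (3 * i + 1)) *
      ((1 - q ^ (3 * i + 2)) / (1 - q ^ (3 * i + 3))) ^ 3 := by
  rw [rho, ← pair_eq (q ^ 2) 1 _ _ one_ne_zero rfl, ← pair_eq (q ^ 3) 1 _ _ one_ne_zero rfl,
    mul_one, mul_one, div_one, div_one,
    show q ^ 4 * (q ^ 3) ^ i = q ^ (3 * i + 4) by ring,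
    show q ^ 3 * (q ^ 3) ^ i = q ^ (3 * i + 3) by ring,
    show q ^ 2 * (q ^ 3) ^ i = q ^ (3 * i + 2) by ring,
    show q * (q ^ 3) ^ i = q ^ (3 * i + 1) by ring, rho_fld1]

lemma rho_Q (n i : ℕ) : rho q (q ^ n + 1 / q ^ n) ((q ^ 3) ^ i) =
    (1 - q ^ (3 * i + 4)) / (1 - q ^ (3 * i + 1)) *
      ((1 - q ^ (3 * i + 2)) / (1 - q ^ (3 * i + 3))) ^ 3 *
      ((1 - ee n * xq (3 * i + 2)) / (1 - ee n * xq (3 * i + 3))) := by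
  have hQ : q ^ n ≠ 0 := pow_ne_zero _ q_ne
  rw [rho, ← pair_eq (q ^ 2) (q ^ n) _ _ hQ rfl, ← pair_eq (q ^ 3) (q ^ n) _ _ hQ rfl,
    show q ^ 4 * (q ^ 3) ^ i = q ^ (3 * i + 4) by ring,
    show q ^ 3 * (q ^ 3) ^ i = q ^ (3 * i + 3) by ring,
    show q ^ 2 * (q ^ 3) ^ i = q ^ (3 * i + 2) by ring,
    show q * (q ^ 3) ^ i = q ^ (3 * i + 1) by ring,
    show q ^ 2 * q ^ n * (q ^ 3) ^ i = q ^ (3 * i + 2) * q ^ n by ring,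
    show q ^ 2 / q ^ n * (q ^ 3) ^ i = q ^ (3 * i + 2) / q ^ n by ring,
    show q ^ 3 * q ^ n * (q ^ 3) ^ i = q ^ (3 * i + 3) * q ^ n by ring,
    show q ^ 3 / q ^ n * (q ^ 3) ^ i = q ^ (3 * i + 3) / q ^ n by ring,
    pair_q n _ (by omega), pair_q n _ (by omega), rho_fld]

lemma J_one (N : ℕ) : ∑ k ∈ Finset.range (N + 1), cc k * be (3 * N + 1) 1 k =
    (1 - q ^ (3 * N + 1)) / (1 - q) * AC 2 N ^ 3 := by
  have := jackson 1 _ one_ne_zero rfl (by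
    intro k
    rw [← pair_eq (q ^ 3) 1 _ _ one_ne_zero rfl, mul_one, div_one,
      show q ^ 3 * (q ^ 3) ^ k = q ^ (3 * k + 3) by ring]
    exact mul_ne_zero (one_sub_qn (by omega)) (one_sub_qn (by omega))) N
  simp only [tt_one, rho_one] at this
  rw [this, Finset.prod_mul_distrib, prod_tel, Finset.prod_pow, AC]

lemma J_Q (N : ℕ) : ∑ k ∈ Finset.range (N + 1), cc k * be (3 * N + 1) 1 k ^ 2 =
    (1 - q ^ (3 * N + 1)) / (1 - q) * AC 2 N ^ 3 * be (3 * N + 1) 2 N := by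
  have hQ : q ^ (3 * N + 1) ≠ 0 := pow_ne_zero _ q_ne
  have := jackson (q ^ (3 * N + 1)) _ hQ rfl (by
    intro k
    rw [← pair_eq (q ^ 3) _ _ _ hQ rfl,
      show q ^ 3 * q ^ (3 * N + 1) * (q ^ 3) ^ k = q ^ (3 * k + 3 + (3 * N + 1)) by ring,
      show q ^ 3 / q ^ (3 * N + 1) * (q ^ 3) ^ k = q ^ (3 * k + 3) / q ^ (3 * N + 1) by ring]
    refine mul_ne_zero (one_sub_qn (by omega)) ?_
    intro h
    rw [sub_eq_zero, eq_div_iff hQ, one_mul] at h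
    have := q_pow_inj h
    omega) N
  simp only [tt_Q, rho_Q] at this
  rw [this, Finset.prod_mul_distrib, Finset.prod_mul_distrib, prod_tel, Finset.prod_pow, AC, be]

lemma Ev.ne {z : ℂ} {f : RatFunc ℚ} {c : ℂ} (h : Ev z f c) (hc : c ≠ 0) : f ≠ 0 := by
  rintro rfl
  obtain ⟨r, s, h1, h2, h3⟩ := h
  rw [zero_mul] at h2
  have hr : r = 0 := alg_zero_iff.1 h2.symm
  rw [hr, map_zero] at h3
  exact (mul_ne_zero hc h1) h3

lemma xq_ev {z : ℂ} {m : ℕ} (h : z ^ m ≠ 1) : Ev z (xq m) (z ^ m / (1 - z ^ m) ^ 2) :=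
  (Ev.qq.pow m).div ((ev_os m).pow 2) (pow_ne_zero _ (os_ne h))

lemma expand_fld {F : Type*} [Field F] (e S a d g : F) (h : 1 - e * d ≠ 0) :
    (1 - e * S + e ^ 2 * g) * ((1 - e * a) / (1 - e * d)) =
      1 - e * (S + (a - d)) + e ^ 2 * ((S * a + g - e * (g * a) - d * (S + a - d)) / (1 - e * d)) := by
  field_simp; ring

lemma expand {z : ℂ} {e : RatFunc ℚ} (he : Ev z e 0) (α δ : ℕ → RatFunc ℚ) (k : ℕ)
    (hα : ∀ i < k, Itg z (α i)) (hδ : ∀ i < k, Itg z (δ i)) :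
    ∃ γ, Itg z γ ∧ ∏ i ∈ Finset.range k, ((1 - e * α i) / (1 - e * δ i)) =
      1 - e * ∑ i ∈ Finset.range k, (α i - δ i) + e ^ 2 * γ := by
  induction k with
  | zero => exact ⟨0, ⟨0, Ev.zero⟩, by simp⟩
  | succ k ih =>
    obtain ⟨g, hg, h⟩ := ih (fun i hi => hα i (by omega)) (fun i hi => hδ i (by omega))
    have ha := hα k (by omega)
    have hd := hδ k (by omega)
    have hS : Itg z (∑ i ∈ Finset.range k, (α i - δ i)) := Itg.sum _ (fun i hi => by
      rw [Finset.mem_range] at hi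
      exact (hα i (by omega)).sub (hδ i (by omega)))
    obtain ⟨c, hc⟩ := hd
    have h1 : Ev z (1 - e * δ k) 1 := (Ev.one.sub (he.mul hc)).of_eq (by ring)
    have hi : Itg z (1 - e * δ k)⁻¹ := ⟨_, h1.inv one_ne_zero⟩
    have hd : Itg z (δ k) := ⟨c, hc⟩
    refine ⟨((∑ i ∈ Finset.range k, (α i - δ i)) * α k + g - e * (g * α k) -
      δ k * ((∑ i ∈ Finset.range k, (α i - δ i)) + α k - δ k)) / (1 - e * δ k), ?_, ?_⟩
    rotate_left
    · rw [Finset.prod_range_succ, Finset.sum_range_succ, h]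
      exact expand_fld _ _ _ _ _ (h1.ne one_ne_zero)
    · rw [div_eq_mul_inv]
      exact ((((hS.mul ha).add hg).sub (Itg.mul ⟨0, he⟩ (hg.mul ha))).sub
        (hd.mul ((hS.add ha).sub hd))).mul hi

def D5 (z : ℂ) (n : ℕ) (f : RatFunc ℚ) : Prop := ∃ h, Itg z h ∧
  f = algebraMap (Polynomial ℚ) (RatFunc ℚ) (Polynomial.cyclotomic n ℚ) ^ 5 * h

lemma D5.add {z : ℂ} {n : ℕ} {f g : RatFunc ℚ} (hf : D5 z n f) (hg : D5 z n g) :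
    D5 z n (f + g) := by
  obtain ⟨a, ha, rfl⟩ := hf
  obtain ⟨b, hb, rfl⟩ := hg
  exact ⟨a + b, ha.add hb, by ring⟩

lemma D5.zero {z : ℂ} {n : ℕ} : D5 z n 0 := ⟨0, ⟨0, Ev.zero⟩, by ring⟩

lemma D5.mul {z : ℂ} {n : ℕ} {f g : RatFunc ℚ} (hf : D5 z n f) (hg : Itg z g) :
    D5 z n (f * g) := by
  obtain ⟨a, ha, rfl⟩ := hf
  exact ⟨a * g, ha.mul hg, by ring⟩

lemma D5.sum {z : ℂ} {n : ℕ} {f : ℕ → RatFunc ℚ} (s : Finset ℕ) (h : ∀ i ∈ s, D5 z n (f i)) :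
    D5 z n (∑ i ∈ s, f i) := by
  induction s using Finset.induction_on with
  | empty => simpa using D5.zero
  | insert i s hi ih =>
    rw [Finset.sum_insert hi]
    exact (h i (Finset.mem_insert_self _ _)).add
      (ih fun j hj => h j (Finset.mem_insert_of_mem hj))

lemma D5.of5 {z : ℂ} {n : ℕ} (hn : 0 < n) (hz : IsPrimitiveRoot z n) {a b : RatFunc ℚ}
    (ha : Ev z a 0) (hb : Ev z b 0) : D5 z n (a ^ 4 * b) := by
  obtain ⟨u, hu, rfl⟩ := ha.dvd hn hz
  obtain ⟨v, hv, rfl⟩ := hb.dvd hn hz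
  exact ⟨u ^ 4 * v, (hu.pow 4).mul hv, by ring⟩

lemma cc_large {z : ℂ} {N k : ℕ} (hN : 0 < N) (hz : IsPrimitiveRoot z (3 * N + 1)) (h1 : N < k)
    (h2 : k ≤ 3 * N) : D5 z (3 * N + 1) (cc k) := by
  obtain ⟨C, hC⟩ := AC1_ev (N := N) 0 (by omega) hz dvd_rfl
  have h := hC k (by omega)
  have h0 : av z k = 0 := by
    rw [av]
    apply Finset.prod_eq_zero (Finset.mem_range.2 h1)
    rw [hz.pow_eq_one]; simp
  rw [h0, mul_zero, mul_zero, zero_add] at h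
  have hz1 : z ^ 1 ≠ 1 := hz.pow_ne_one_of_pos_of_lt (by omega) (by omega)
  have h3 : Itg z ((1 - q ^ (6 * k + 1)) / (1 - q ^ 1)) := ⟨_, (ev_os _).div (ev_os 1) (os_ne hz1)⟩
  rw [pow_one] at h3
  have := ((D5.of5 (by omega) hz h h).mul (⟨_, h⟩ : Itg z (AC 1 k))).mul
    (h3.mul ⟨_, Ev.qq.pow (3 * k)⟩)
  rw [cc]
  convert this using 1
  ring

lemma ee_ev {z : ℂ} {n : ℕ} (hn : 0 < n) (hz : IsPrimitiveRoot z n) : Ev z (ee n) 0 := by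
  have := ((ev_os (z := z) n).pow 2).div (Ev.qq.pow n) (by rw [hz.pow_eq_one]; exact one_ne_zero)
  exact this.of_eq (by rw [hz.pow_eq_one]; simp)

lemma cc_ev {z : ℂ} {N k : ℕ} (hN : 0 < N) (hz : IsPrimitiveRoot z (3 * N + 1)) (hk : k ≤ N) :
    Ev z (cc k) ((1 - z ^ (6 * k + 1)) / (1 - z) * av z k ^ 6 * z ^ (3 * k)) := by
  have hz1 : z ^ 1 ≠ 1 := hz.pow_ne_one_of_pos_of_lt (by omega) (by omega)
  have hA : Ev z (AC 1 k) (av z k) := by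
    apply Ev.prod
    intro i hi
    rw [Finset.mem_range] at hi
    exact (ev_os _).div (ev_os _) (os_ne (hz.pow_ne_one_of_pos_of_lt (by omega) (by omega)))
  have := ((ev_os (z := z) (6 * k + 1)).div (ev_os 1) (os_ne hz1))
  rw [pow_one, pow_one] at this
  exact (this.mul (hA.pow 6)).mul (Ev.qq.pow _)

lemma partA {z : ℂ} {N : ℕ} (hN : 0 < N) (hz : IsPrimitiveRoot z (3 * N + 1)) :
    D5 z (3 * N + 1) (∑ k ∈ Finset.range (N + 1), cc k * (1 - be (3 * N + 1) 1 k) ^ 2) := by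
  have he := ee_ev (by omega) hz
  have hx : ∀ m, 0 < m → m < 3 * N + 1 → Ev z (xq m) (z ^ m / (1 - z ^ m) ^ 2) := fun m h1 h2 =>
    xq_ev (hz.pow_ne_one_of_pos_of_lt (by omega) h2)
  have hex : ∀ k, ∃ s, k ≤ N → Ev z s (sv z k) ∧
      1 - be (3 * N + 1) 1 k = ee (3 * N + 1) * s := by
    intro k
    by_cases hk : k ≤ N
    · obtain ⟨g, ⟨c, hg⟩, h⟩ := expand he (fun i => xq (3 * i + 1)) (fun i => xq (3 * i + 3)) k
        (fun i hi => ⟨_, hx _ (by omega) (by omega)⟩) (fun i hi => ⟨_, hx _ (by omega) (by omega)⟩)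
      refine ⟨∑ i ∈ Finset.range k, (xq (3 * i + 1) - xq (3 * i + 3)) - ee (3 * N + 1) * g,
        fun _ => ⟨?_, ?_⟩⟩
      · refine ((Ev.sum _ fun i hi => ?_).sub (he.mul hg)).of_eq (by rw [zero_mul, sub_zero]; rfl)
        rw [Finset.mem_range] at hi
        exact (hx _ (by omega) (by omega)).sub (hx _ (by omega) (by omega))
      · rw [be, h]; ring
    · exact ⟨0, fun h => absurd h hk⟩
  choose s hs using hex
  have h0 : Ev z (∑ k ∈ Finset.range (N + 1), cc k * s k ^ 2) 0 := by
    refine (Ev.sum _ fun k hk => ?_).of_eq (sum_rev (N := N) hz.pow_eq_one ?_ ?_ (fun k => sv z k ^ 2) ?_)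
    · rw [Finset.mem_range] at hk
      exact (cc_ev hN hz (by omega)).mul ((hs k (by omega)).1.pow 2)
    · intro i hi; exact hz.pow_ne_one_of_pos_of_lt (by omega) (by omega)
    · intro i hi; exact hz.pow_ne_one_of_pos_of_lt (by omega) (by omega)
    · intro k j h
      simp only [sv_sym hz.pow_eq_one k j h]
  have hQ : Itg z (1 / (q ^ (3 * N + 1)) ^ 2) :=
    ⟨_, Ev.one.div ((Ev.qq.pow _).pow 2) (by rw [hz.pow_eq_one]; simp)⟩
  have hE : Ev z (1 - q ^ (3 * N + 1)) 0 := (ev_os _).of_eq (by rw [hz.pow_eq_one]; simp)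
  have := (D5.of5 (by omega) hz hE h0).mul hQ
  convert this using 1
  rw [Finset.mul_sum, Finset.sum_mul]
  apply Finset.sum_congr rfl
  intro k hk
  rw [Finset.mem_range] at hk
  rw [(hs k (by omega)).2, ee]
  generalize 1 - q ^ (3 * N + 1) = E
  generalize q ^ (3 * N + 1) = Q
  simp only [div_eq_mul_inv, mul_pow, inv_pow]; ring

noncomputable def TT (N : ℕ) : RatFunc ℚ :=
  ∑ i ∈ Finset.range N, (xq (3 * i + 2) - xq (3 * i + 3))

noncomputable def RR (N : ℕ) : RatFunc ℚ :=
  (1 - q ^ (3 * N + 1)) / (1 - q) * AC 2 N ^ 3 *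
    (1 + (1 - q ^ (3 * N + 1)) ^ 2 * (2 - q ^ (3 * N + 1)) * TT N)

lemma partB_fld {F : Type*} [Field F] (Q p A t g : F) (hQ : Q ≠ 0) :
    (1 - Q) / p * A * (2 - (1 - (1 - Q) ^ 2 / Q * t + ((1 - Q) ^ 2 / Q) ^ 2 * g)) -
      (1 - Q) / p * A * (1 + (1 - Q) ^ 2 * (2 - Q) * t) =
    (1 - Q) ^ 4 * (1 - Q) * (A * (t * (1 / Q) - g * (1 / Q) ^ 2) * (1 / p)) := by
  by_cases hp : p = 0
  · simp [hp]
  field_simp; ring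

lemma partB {z : ℂ} {N : ℕ} (hN : 0 < N) (hz : IsPrimitiveRoot z (3 * N + 1)) :
    D5 z (3 * N + 1) ((1 - q ^ (3 * N + 1)) / (1 - q) * AC 2 N ^ 3 * (2 - be (3 * N + 1) 2 N) -
      RR N) := by
  have he := ee_ev (by omega) hz
  have hx : ∀ m, 0 < m → m < 3 * N + 1 → Itg z (xq m) := fun m h1 h2 =>
    ⟨_, xq_ev (hz.pow_ne_one_of_pos_of_lt (by omega) h2)⟩
  obtain ⟨g, hg, h⟩ := expand he (fun i => xq (3 * i + 2)) (fun i => xq (3 * i + 3)) N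
    (fun i hi => hx _ (by omega) (by omega)) (fun i hi => hx _ (by omega) (by omega))
  have hT : Itg z (TT N) := Itg.sum _ (fun i hi => by
    rw [Finset.mem_range] at hi
    exact (hx _ (by omega) (by omega)).sub (hx _ (by omega) (by omega)))
  have hz1 : z ^ 1 ≠ 1 := hz.pow_ne_one_of_pos_of_lt (by omega) (by omega)
  have hp : Itg z (1 / (1 - q ^ 1)) := ⟨_, Ev.one.div (ev_os 1) (os_ne hz1)⟩
  rw [pow_one] at hp
  have hQ : Itg z (1 / (q ^ (3 * N + 1))) :=
    ⟨_, Ev.one.div (Ev.qq.pow _) (by rw [hz.pow_eq_one]; simp)⟩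
  have hE : Ev z (1 - q ^ (3 * N + 1)) 0 := (ev_os _).of_eq (by rw [hz.pow_eq_one]; simp)
  rw [RR, be, h, ← TT, ee, partB_fld _ _ _ _ _ (pow_ne_zero _ q_ne)]
  exact (D5.of5 (by omega) hz hE hE).mul ((((AC_itg 2 N (by omega) hz dvd_rfl).pow 3).mul
    ((hT.mul hQ).sub (hg.mul (hQ.pow 2)))).mul hp)

lemma main5 {z : ℂ} {N M : ℕ} (hN : 0 < N) (hz : IsPrimitiveRoot z (3 * N + 1))
    (hM : M = N ∨ M = 3 * N) :
    D5 z (3 * N + 1) (∑ k ∈ Finset.range (M + 1), cc k - RR N) := by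
  have hA : D5 z (3 * N + 1) (∑ k ∈ Finset.range (N + 1), cc k - RR N) := by
    convert (partA hN hz).add (partB hN hz) using 1
    rw [mul_sub, ← J_Q, ← J_one, mul_two]
    have : ∀ k, cc k * (1 - be (3 * N + 1) 1 k) ^ 2 =
      cc k - cc k * be (3 * N + 1) 1 k - cc k * be (3 * N + 1) 1 k +
        cc k * be (3 * N + 1) 1 k ^ 2 := fun k => by ring
    simp only [this, Finset.sum_add_distrib, Finset.sum_sub_distrib]
    ring
  rcases hM with rfl | rfl
  · exact hA
  · rw [show 3 * N + 1 = (N + 1) + 2 * N by ring, Finset.sum_range_add]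
    have := hA.add (D5.sum (z := z) (n := 3 * N + 1) (f := fun i => cc (N + 1 + i)) (Finset.range (2 * N)) (fun i hi => by
      rw [Finset.mem_range] at hi
      exact cc_large hN hz (by omega) (by omega)))
    convert this using 1
    · ring
    · ring

lemma RR_zero {z : ℂ} {d N : ℕ} (hd1 : 1 < d) (hz : IsPrimitiveRoot z d)
    (hd : d ∣ 3 * N + 1) : Ev z (RR N) 0 := by
  have hz1 : z ^ 1 ≠ 1 := hz.pow_ne_one_of_pos_of_lt (by omega) (by omega)
  have hzn : z ^ (3 * N + 1) = 1 := (hz.pow_eq_one_iff_dvd _).2 hd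
  have h1 : Ev z ((1 - q ^ (3 * N + 1)) / (1 - q ^ 1)) 0 :=
    ((ev_os _).div (ev_os 1) (os_ne hz1)).of_eq (by rw [hzn]; simp)
  rw [pow_one] at h1
  have hx : ∀ m, m ≠ 0 → Itg z ((1 - q ^ (3 * N + 1)) ^ 2 * xq m) := by
    intro m hm
    have := ((ratio_itg (by omega) hz hd hm).pow 2).mul (⟨_, Ev.qq.pow m⟩ : Itg z (q ^ m))
    convert this using 1
    rw [xq, div_pow]; ring
  have h2 : Itg z ((1 - q ^ (3 * N + 1)) ^ 2 * TT N) := by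
    rw [TT, Finset.mul_sum]
    refine Itg.sum _ fun i _ => ?_
    rw [mul_sub]
    exact (hx _ (by omega)).sub (hx _ (by omega))
  have h3 : Itg z (1 + (1 - q ^ (3 * N + 1)) ^ 2 * (2 - q ^ (3 * N + 1)) * TT N) := by
    rw [mul_right_comm]
    exact Itg.add ⟨_, Ev.one⟩ (h2.mul ⟨_, Ev.two.sub (Ev.qq.pow _)⟩)
  obtain ⟨a, ha⟩ := (AC_itg 2 N (by omega) hz hd).pow 3
  obtain ⟨b, hb⟩ := h3
  exact ((h1.mul ha).mul hb).of_eq (by ring)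

lemma term_conv (m : ℕ) : q ^ (m : ℤ) / qint (m : ℤ) ^ 2 = (1 - q) ^ 2 * xq m := by
  rw [qint_nat, xq, zpow_natCast, div_pow, div_div_eq_mul_div]; ring

lemma RR_eq (N : ℕ) : qint ((3 * N + 1 : ℕ) : ℤ) *
        (qpoch (q ^ 2) (q ^ 3) N ^ 3 / qpoch (q ^ 3) (q ^ 3) N ^ 3) *
        (1 + qint ((3 * N + 1 : ℕ) : ℤ) ^ 2 * (2 - q ^ (3 * N + 1)) *
          ∑ j ∈ Finset.Icc 1 N,
            (q ^ (3 * (j : ℤ) - 1) / qint (3 * j - 1) ^ 2 -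
              q ^ (3 * (j : ℤ)) / qint (3 * j) ^ 2)) = RR N := by
  have h1 : 1 - q ≠ 0 := by simpa using one_sub_qn (a := 1) (by norm_num)
  have hs : ∑ j ∈ Finset.Icc 1 N, (q ^ (3 * (j : ℤ) - 1) / qint (3 * j - 1) ^ 2 -
              q ^ (3 * (j : ℤ)) / qint (3 * j) ^ 2) = (1 - q) ^ 2 * TT N := by
    rw [TT, Finset.mul_sum, ← Finset.Ico_add_one_right_eq_Icc, Finset.sum_Ico_eq_sum_range]
    apply Finset.sum_congr (by simp)
    intro i _
    rw [mul_sub, ← term_conv, ← term_conv]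
    push_cast
    rw [show 3 * (1 + (i : ℤ)) - 1 = 3 * i + 2 by ring, show 3 * (1 + (i : ℤ)) = 3 * i + 3 by ring]
  rw [hs, ← div_pow, qp_div, qint_nat, RR, div_pow]
  congr 2
  rw [show ∀ a b c d : RatFunc ℚ, a / b * c * (b * d) = b / b * (a * c * d) from fun a b c d => by ring,
    div_self (pow_ne_zero _ h1), one_mul]

theorem stmt1 (n : ℕ) (hpos : 0 < n) (hmod : n % 3 = 1) (M : ℕ)
    (hM : M = (n - 1) / 3 ∨ M = n - 1) :
    qcong
      (∑ k ∈ Finset.range (M + 1),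
        qint (6 * k + 1) * (qpoch q (q ^ 3) k ^ 6 / qpoch (q ^ 3) (q ^ 3) k ^ 6) *
          q ^ (3 * k))
      (qint n *
        (qpoch (q ^ 2) (q ^ 3) ((n - 1) / 3) ^ 3 /
          qpoch (q ^ 3) (q ^ 3) ((n - 1) / 3) ^ 3) *
        (1 + qint n ^ 2 * (2 - q ^ n) *
          ∑ j ∈ Finset.Icc 1 ((n - 1) / 3),
            (q ^ (3 * (j : ℤ) - 1) / qint (3 * j - 1) ^ 2 -
              q ^ (3 * (j : ℤ)) / qint (3 * j) ^ 2)))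
      ((∑ i ∈ Finset.range n, Polynomial.X ^ i) * Polynomial.cyclotomic n ℚ ^ 4) := by
  obtain ⟨N, rfl⟩ : ∃ N, n = 3 * N + 1 := ⟨n / 3, by omega⟩
  have hN : (3 * N + 1 - 1) / 3 = N := by omega
  rw [hN] at hM ⊢
  rw [Nat.add_sub_cancel] at hM
  rw [RR_eq, Finset.sum_congr rfl (fun k _ => cc_eq k)]
  rcases Nat.eq_zero_or_pos N with rfl | hN0
  · have : M = 0 := by omega
    subst this
    have h1 : 1 - q ≠ 0 := by simpa using one_sub_qn (a := 1) (by norm_num)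
    refine ⟨0, 1, isCoprime_one_left, ?_⟩
    simp [cc, RR, TT, AC, h1]
  · apply qcong_of (by omega)
    intro d hd
    rw [Finset.mem_erase, Nat.mem_divisors] at hd
    obtain ⟨hd1, hdn, -⟩ := hd
    have hd0 : 0 < d := Nat.pos_of_dvd_of_pos hdn (by omega)
    refine ⟨_, Complex.isPrimitiveRoot_exp d hd0.ne', ?_⟩
    split_ifs with h
    · subst h
      exact main5 hN0 (Complex.isPrimitiveRoot_exp _ hd0.ne') hM
    · have hz := Complex.isPrimitiveRoot_exp d hd0.ne'
      rw [pow_one]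
      exact Ev.dvd hd0 hz (((lhs_zero (by omega) hz hdn hM).sub
        (RR_zero (by omega) hz hdn)).of_eq (by ring))
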